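/- Let $M,N$ be integers with $N\ge 2$, $M>N$ (hence $M\ge 3$), and let $F\in\mathbb{R}^{M\times N}$ be the analysis operator of a unit-norm tight frame: the rows of $F$ have Euclidean norm $1$ and $F^{*}F=\frac{M}{N}I_N$. Put $F^{\dagger}=(F^{*}F)^{-1}F^{*}$. For a composition $m=(m_1,\dots,m_K)$ of $M$, let $\mathcal I_1,\dots,\mathcal I_K$ be the consecutive blocks of $\{1,\dots,M\}$ of sizes $m_1,\dots,m_K$. A vector $z\in\mathbb{R}^M$ is $m$-descending if $z_k\ge z_\ell$ whenever $k\in\mathcal I_i$, $\ell\in\mathcal I_j$ and $i<j$. Let $D(m)$ be the matrix with one row for each pair $(k,\ell)$ with $k\in\mathcal I_i$, $\ell\in\mathcal I_{i+1}$, $1\le i<K$, that row having entry $1$ in column $k$, entry $-1$ in column $\ell$ and zeros elsewhere. A Variant I initial codeword compatible with $m$ is a vector $\hat y_{\mathrm{init}}\in\mathbb{R}^M$ that equals a constant $\mu_i$ on each $\mathcal I_i$, with $\mu_1>\mu_2>\dots>\mu_K$. A Variant I frame permutation quantization (FPQ) encoding of $x\in\mathbb{R}^N$ is an $M\times M$ permutation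 matrix $P$ that preserves the order of appearance of the entries it places in each block $\mathcal I_i$ and for which $PFx$ is $m$-descending (when $Fx$ has ties there may be several such $P$, and all are admitted). Canonical reconstruction is consistent for $(m,\hat y_{\mathrm{init}})$ if, for every $x\in\mathbb{R}^N$ and every encoding $P$ of $x$, the vector $\hat x=F^{\dagger}P^{-1}\hat y_{\mathrm{init}}$ satisfies $D(m)PF\hat x\ge 0$ entrywise. The real harmonic tight frame of $M$ vectors in $\mathbb{R}^N$ is given, for $k=0,\dots,M-1$, by $$\varphi_{k+1}^{T}=\sqrt{\tfrac2N}\Big[\cos\tfrac{k\pi}{M},\cos\tfrac{3k\pi}{M},\dots,\cos\tfrac{(N-1)k\pi}{M},\sin\tfrac{k\pi}{M},\sin\tfrac{3k\pi}{M},\dots,\sin\tfrac{(N-1)k\pi}{M}\Big]$$ for even $N$ and $$\varphi_{k+1}^{T}=\sqrt{\tfrac2N}\Big[\tfrac1{\sqrt2},\cos\tfrac{2k\pi}{M},\cos\tfrac{4k\pi}{M},\dots,\cos\tfrac{(N-1)k\pi}{M},\sin\tfrac{2k\pi}{M},\sin\tfrac{4k\pi}{M},\dots,\sin\tfrac{(N-1)k\pi}{M}\Big]$$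 for odd $N$. The modulated harmonic tight frames are $\psi_k=\gamma(-1)^k\varphi_k$, $k=1,\dots,M$, with fixed $\gamma\in\{1,-1\}$. Type I equivalence applies one orthogonal matrix to all frame vectors; Type II equivalence permutes the frame vectors. Then canonical reconstruction is consistent for every composition $m$ of $M$ and every Variant I initial codeword compatible with $m$ if and only if $M=N+1$ and the frame given by the rows of $F$ is, up to Type I and/or Type II equivalence, a modulated harmonic tight frame. -/

import Mathlib

/-- The analysis operator of a unit-norm tight frame: the rows (the frame vectors) have Euclidean
norm one and `F* F = (M/N) I_N`. -/
structure IsUNTF {M N : ℕ} (F : Matrix (Fin M) (Fin N) ℝ) : Prop where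
  unit_norm : ∀ k : Fin M, ∑ i : Fin N, F k i ^ 2 = 1
  tight : F.transpose * F = ((M : ℝ) / (N : ℝ)) • (1 : Matrix (Fin N) (Fin N) ℝ)

/-- The real harmonic tight frame of `M` vectors in `ℝ^N`, as the matrix whose rows are the frame
vectors. Indices are 0-based: row `k` is `φ_{k+1}`, for `k = 0, …, M-1`. -/
noncomputable def htf (M N : ℕ) : Matrix (Fin M) (Fin N) ℝ :=
  Matrix.of fun k i =>
    if N % 2 = 0 then
      if (i : ℕ) < N / 2 then
        Real.sqrt (2 / N) * Real.cos (((2 * (i : ℕ) + 1 : ℕ) : ℝ) * (k : ℕ) * Real.pi / M)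
      else
        Real.sqrt (2 / N) *
          Real.sin (((2 * ((i : ℕ) - N / 2) + 1 : ℕ) : ℝ) * (k : ℕ) * Real.pi / M)
    else
      if (i : ℕ) = 0 then Real.sqrt (2 / N) * (1 / Real.sqrt 2)
      else if (i : ℕ) ≤ (N - 1) / 2 then
        Real.sqrt (2 / N) * Real.cos (((2 * (i : ℕ) : ℕ) : ℝ) * (k : ℕ) * Real.pi / M)
      else
        Real.sqrt (2 / N) *
          Real.sin (((2 * ((i : ℕ) - (N - 1) / 2) : ℕ) : ℝ) * (k : ℕ) * Real.pi / M)

/-- The harmonic tight frame modulated with sign `γ`: `ψ_k = γ (-1)^k φ_k` for `k = 1, …, M`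
(row `k` here is `ψ_{k+1}`). -/
noncomputable def modulatedHTF (M N : ℕ) (γ : ℝ) : Matrix (Fin M) (Fin N) ℝ :=
  Matrix.of fun k i => γ * (-1 : ℝ) ^ ((k : ℕ) + 1) * htf M N k i

/-- Type I equivalence: a common orthogonal matrix is applied to all frame vectors. -/
def TypeIEquiv {M N : ℕ} (Φ Ψ : Matrix (Fin M) (Fin N) ℝ) : Prop :=
  ∃ U ∈ Matrix.orthogonalGroup (Fin N) ℝ, ∀ k : Fin M, Ψ k = U.mulVec (Φ k)

/-- Type II equivalence: the frame vectors are permuted. -/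
def TypeIIEquiv {M N : ℕ} (Φ Ψ : Matrix (Fin M) (Fin N) ℝ) : Prop :=
  ∃ τ : Equiv.Perm (Fin M), ∀ k : Fin M, Ψ k = Φ (τ k)

/-- The rows of `F` form a modulated harmonic tight frame, up to Type I and/or Type II equivalence
(both equivalences are reflexive). -/
def IsModulatedHTFUpToEquiv {M N : ℕ} (F : Matrix (Fin M) (Fin N) ℝ) : Prop :=
  ∃ γ : ℝ, (γ = 1 ∨ γ = -1) ∧
    ∃ G : Matrix (Fin M) (Fin N) ℝ, TypeIEquiv (modulatedHTF M N γ) G ∧ TypeIIEquiv G F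

/-- `y` is a Variant I initial codeword compatible with the composition `m = (m_1, …, m_K)`:
`y = (μ_1, …, μ_1, …, μ_K, …, μ_K)` with `μ_1 > ⋯ > μ_K` and `μ_i` repeated `m_i` times. -/
def IsVariantICodeword {M : ℕ} (m : Composition M) (y : Fin M → ℝ) : Prop :=
  ∃ μ : Fin m.length → ℝ, StrictAnti μ ∧ ∀ k : Fin M, y k = μ (m.index k)

/-- `z` is `m`-descending: its `m_1` largest entries are in the first `m_1` positions, its `m_2`
next-largest entries are in the next `m_2` positions, and so on. -/
def IsDescending {M : ℕ} (m : Composition M) (z : Fin M → ℝ) : Prop :=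
  ∀ k l : Fin M, m.index k < m.index l → z l ≤ z k

/-- Indices of the rows of `D(m)`: the pairs `(k, l)` with `k` in some block of `m` and `l` in the
next block. -/
abbrev DiffRow {M : ℕ} (m : Composition M) : Type :=
  {p : Fin M × Fin M // (m.index p.1 : ℕ) + 1 = (m.index p.2 : ℕ)}

/-- The differencing matrix `D(m)`: row `(k, l)` has entry `1` in column `k`, entry `-1` in
column `l`, and zeros elsewhere. -/
def diffMatrix {M : ℕ} (m : Composition M) : Matrix (DiffRow m) (Fin M) ℝ :=
  Matrix.of fun p j => if j = p.1.1 then 1 else if j = p.1.2 then -1 else 0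

/-- The set `𝒢(m)` of permutations that keep, within every block of `m`, the order in which the
entries appeared: `(P y)_i = y_{σ i}` for `P = σ.permMatrix`. -/
def permSet {M : ℕ} (m : Composition M) : Set (Equiv.Perm (Fin M)) :=
  {σ | ∀ i j : Fin M, m.index i = m.index j → i < j → σ i < σ j}

/-- The permutation matrix `P` of `σ` is a Variant I FPQ encoding of `x` with frame `F` and
composition `m`: `P ∈ 𝒢(m)` and `P F x` is `m`-descending. -/
def IsVariantIEncoding {M N : ℕ} (F : Matrix (Fin M) (Fin N) ℝ) (m : Composition M)
    (x : Fin N → ℝ) (σ : Equiv.Perm (Fin M)) : Prop :=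
  σ ∈ permSet m ∧ IsDescending m ((σ.permMatrix ℝ).mulVec (F.mulVec x))

/-- The pseudo-inverse `F† = (F* F)⁻¹ F*`. -/
noncomputable def pinv {M N : ℕ} (F : Matrix (Fin M) (Fin N) ℝ) : Matrix (Fin N) (Fin M) ℝ :=
  (F.transpose * F)⁻¹ * F.transpose

/-- Canonical decoding `x̂ = F† P⁻¹ y_init`, where `P` is the permutation matrix of `σ`. -/
noncomputable def canonicalDecode {M N : ℕ} (F : Matrix (Fin M) (Fin N) ℝ)
    (y : Fin M → ℝ) (σ : Equiv.Perm (Fin M)) : Fin N → ℝ :=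
  (pinv F).mulVec (((σ⁻¹ : Equiv.Perm (Fin M)).permMatrix ℝ).mulVec y)

/-- `x'` is consistent with the encoding `P` (the permutation matrix of `σ`): `D(m) P F x' ≥ 0`
entrywise. -/
def IsConsistentWith {M N : ℕ} (F : Matrix (Fin M) (Fin N) ℝ) (m : Composition M)
    (σ : Equiv.Perm (Fin M)) (x' : Fin N → ℝ) : Prop :=
  ∀ p : DiffRow m,
    0 ≤ (diffMatrix m).mulVec ((σ.permMatrix ℝ).mulVec (F.mulVec x')) p

/-- Canonical reconstruction is consistent with Variant I FPQ encoding using the frame `F`, the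
composition `m` and the initial codeword `y`. -/
def CanonicalConsistent {M N : ℕ} (F : Matrix (Fin M) (Fin N) ℝ) (m : Composition M)
    (y : Fin M → ℝ) : Prop :=
  ∀ (x : Fin N → ℝ) (σ : Equiv.Perm (Fin M)), IsVariantIEncoding F m x σ →
    IsConsistentWith F m σ (canonicalDecode F y σ)

open Matrix

theorem two_mul_sin_mul_sum_cos_odd (θ : ℝ) (n : ℕ) :
    2 * Real.sin θ * ∑ i ∈ Finset.range n, Real.cos ((2 * i + 1) * θ) = Real.sin (2 * n * θ) := by
  induction n with
  | zero => simp
  | succ n ih =>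
    rw [Finset.sum_range_succ, mul_add, ih]
    have h1 : (2 * ((n + 1 : ℕ) : ℝ)) * θ = (2 * n + 1) * θ + θ := by push_cast; ring
    have h2 : (2 * (n : ℝ)) * θ = (2 * n + 1) * θ - θ := by ring
    rw [h1, h2, Real.sin_add, Real.sin_sub]
    ring

theorem sin_mul_one_add_sum_cos_even (θ : ℝ) (n : ℕ) :
    Real.sin θ * (1 + 2 * ∑ i ∈ Finset.range n, Real.cos ((2 * i + 2) * θ)) =
      Real.sin ((2 * n + 1) * θ) := by
  induction n with
  | zero => simp
  | succ n ih =>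
    rw [Finset.sum_range_succ, mul_add 2, ← add_assoc, mul_add (Real.sin θ), ih]
    have h1 : (2 * ((n + 1 : ℕ) : ℝ) + 1) * θ = (2 * n + 2) * θ + θ := by push_cast; ring
    have h2 : (2 * (n : ℝ) + 1) * θ = (2 * n + 2) * θ - θ := by ring
    rw [h1, h2, Real.sin_add, Real.sin_sub]
    ring

theorem htf_gram_even (M n : ℕ) (k l : Fin M) :
    ∑ i : Fin (2 * n), htf M (2 * n) k i * htf M (2 * n) l i =
      2 / ((2 * n : ℕ) : ℝ) * ∑ i ∈ Finset.range n,
        Real.cos ((2 * i + 1) * (((k : ℕ) - (l : ℕ) : ℝ) * Real.pi / M)) := by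
  have hs : Real.sqrt (2 / ((2 * n : ℕ) : ℝ)) * Real.sqrt (2 / ((2 * n : ℕ) : ℝ)) =
      2 / ((2 * n : ℕ) : ℝ) := Real.mul_self_sqrt (by positivity)
  have hmod : 2 * n % 2 = 0 := by omega
  have hdiv : 2 * n / 2 = n := by omega
  simp only [htf, of_apply, hmod, if_true, hdiv]
  rw [Fin.sum_univ_eq_sum_range (fun i : ℕ =>
    (if i < n then √(2 / ((2 * n : ℕ) : ℝ)) *
        Real.cos (((2 * i + 1 : ℕ) : ℝ) * (k : ℕ) * Real.pi / M)
      else √(2 / ((2 * n : ℕ) : ℝ)) *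
        Real.sin (((2 * (i - n) + 1 : ℕ) : ℝ) * (k : ℕ) * Real.pi / M)) *
    (if i < n then √(2 / ((2 * n : ℕ) : ℝ)) *
        Real.cos (((2 * i + 1 : ℕ) : ℝ) * (l : ℕ) * Real.pi / M)
      else √(2 / ((2 * n : ℕ) : ℝ)) *
        Real.sin (((2 * (i - n) + 1 : ℕ) : ℝ) * (l : ℕ) * Real.pi / M))) (2 * n),
    two_mul n, Finset.sum_range_add, ← two_mul n, ← Finset.sum_add_distrib, Finset.mul_sum]
  refine Finset.sum_congr rfl fun i hi => ?_
  have hi' : i < n := Finset.mem_range.1 hi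
  have e : (2 * (i : ℝ) + 1) * (((k : ℕ) - (l : ℕ) : ℝ) * Real.pi / M) =
      ((2 * i + 1 : ℕ) : ℝ) * (k : ℕ) * Real.pi / M -
        ((2 * i + 1 : ℕ) : ℝ) * (l : ℕ) * Real.pi / M := by push_cast; ring
  have hn : ¬ n + i < n := by omega
  rw [e, Real.cos_sub]
  simp only [hi', hn, if_true, if_false, Nat.add_sub_cancel_left]
  rw [mul_add, mul_mul_mul_comm, mul_mul_mul_comm √_ (Real.sin _), hs]

theorem htf_gram_odd (M n : ℕ) (k l : Fin M) :
    ∑ i : Fin (2 * n + 1), htf M (2 * n + 1) k i * htf M (2 * n + 1) l i =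
      1 / ((2 * n + 1 : ℕ) : ℝ) * (1 + 2 * ∑ i ∈ Finset.range n,
        Real.cos ((2 * i + 2) * (((k : ℕ) - (l : ℕ) : ℝ) * Real.pi / M))) := by
  have hs : Real.sqrt (2 / ((2 * n + 1 : ℕ) : ℝ)) * Real.sqrt (2 / ((2 * n + 1 : ℕ) : ℝ)) =
      2 / ((2 * n + 1 : ℕ) : ℝ) := Real.mul_self_sqrt (by positivity)
  have h2 : (1 / Real.sqrt 2) * (1 / Real.sqrt 2) = 1 / 2 := by
    rw [div_mul_div_comm, Real.mul_self_sqrt (by norm_num)]; norm_num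
  have hr : ∀ a b : ℝ, a * (1 + 2 * b) = a + a * 2 * b := fun a b => by ring
  have hmod : ¬ (2 * n + 1) % 2 = 0 := by omega
  have hdiv : (2 * n + 1 - 1) / 2 = n := by omega
  rw [Fin.sum_univ_succ]
  simp only [htf, of_apply, hmod, if_false, hdiv, Fin.val_zero, if_true, Fin.val_succ,
    Nat.succ_ne_zero]
  rw [Fin.sum_univ_eq_sum_range (fun i : ℕ =>
    (if i + 1 ≤ n then √(2 / ((2 * n + 1 : ℕ) : ℝ)) *
        Real.cos (((2 * (i + 1) : ℕ) : ℝ) * (k : ℕ) * Real.pi / M)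
      else √(2 / ((2 * n + 1 : ℕ) : ℝ)) *
        Real.sin (((2 * (i + 1 - n) : ℕ) : ℝ) * (k : ℕ) * Real.pi / M)) *
    (if i + 1 ≤ n then √(2 / ((2 * n + 1 : ℕ) : ℝ)) *
        Real.cos (((2 * (i + 1) : ℕ) : ℝ) * (l : ℕ) * Real.pi / M)
      else √(2 / ((2 * n + 1 : ℕ) : ℝ)) *
        Real.sin (((2 * (i + 1 - n) : ℕ) : ℝ) * (l : ℕ) * Real.pi / M))) (2 * n),
    two_mul n, Finset.sum_range_add, ← two_mul n, ← Finset.sum_add_distrib, hr, Finset.mul_sum]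
  congr 1
  · linear_combination (1 / Real.sqrt 2) * (1 / Real.sqrt 2) * hs +
      2 / ((2 * n + 1 : ℕ) : ℝ) * h2
  refine Finset.sum_congr rfl fun i hi => ?_
  have hi' : i + 1 ≤ n := Finset.mem_range.1 hi
  have e : (2 * (i : ℝ) + 2) * (((k : ℕ) - (l : ℕ) : ℝ) * Real.pi / M) =
      ((2 * (i + 1) : ℕ) : ℝ) * (k : ℕ) * Real.pi / M -
        ((2 * (i + 1) : ℕ) : ℝ) * (l : ℕ) * Real.pi / M := by push_cast; ring
  have hn : ¬ n + i + 1 ≤ n := by omega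
  have hsub : n + i + 1 - n = i + 1 := by omega
  have hs' : 1 / ((2 * n + 1 : ℕ) : ℝ) * 2 =
      √(2 / ((2 * n + 1 : ℕ) : ℝ)) * √(2 / ((2 * n + 1 : ℕ) : ℝ)) := by rw [hs]; ring
  rw [e, Real.cos_sub, hs']
  simp only [hi', hn, if_true, if_false, hsub]
  ring

theorem htf_gram_self {M N : ℕ} (hN : 0 < N) (k : Fin M) :
    ∑ i : Fin N, htf M N k i * htf M N k i = 1 := by
  have hN' : (N : ℝ) ≠ 0 := by positivity
  obtain ⟨n, rfl | rfl⟩ := N.even_or_odd'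
  · have hn : (n : ℝ) ≠ 0 := by simpa using hN'
    rw [htf_gram_even]
    simp only [sub_self, zero_mul, zero_div, mul_zero, Real.cos_zero, Finset.sum_const,
      Finset.card_range, nsmul_eq_mul]
    push_cast
    field_simp
  · rw [htf_gram_odd]
    simp only [sub_self, zero_mul, zero_div, mul_zero, Real.cos_zero, Finset.sum_const,
      Finset.card_range, nsmul_eq_mul]
    push_cast at hN' ⊢
    field_simp
    ring

theorem htf_gram_mul_sin {M N : ℕ} (hN : 0 < N) (k l : Fin M) :
    (∑ i : Fin N, htf M N k i * htf M N l i) * N *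
        Real.sin (((k : ℕ) - (l : ℕ) : ℝ) * Real.pi / M) =
      Real.sin (N * (((k : ℕ) - (l : ℕ) : ℝ) * Real.pi / M)) := by
  have hN' : (N : ℝ) ≠ 0 := by positivity
  obtain ⟨n, rfl | rfl⟩ := N.even_or_odd'
  · rw [htf_gram_even, mul_right_comm (2 / _), div_mul_cancel₀ _ hN', mul_right_comm,
      two_mul_sin_mul_sum_cos_odd, Nat.cast_mul, Nat.cast_ofNat]
  · rw [htf_gram_odd, mul_right_comm (1 / _), div_mul_cancel₀ _ hN', one_mul, mul_comm,
      sin_mul_one_add_sum_cos_even, Nat.cast_add, Nat.cast_mul, Nat.cast_ofNat, Nat.cast_one]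

/-- The rows of `F` are unit vectors with all mutual inner products equal to `-1/N`: they are the
vertices of a regular simplex centred at the origin. -/
def HasSimplexGram {M N : ℕ} (F : Matrix (Fin M) (Fin N) ℝ) : Prop :=
  ∀ k l : Fin M, (F * Fᵀ) k l = if k = l then 1 else -1 / (N : ℝ)

theorem mul_transpose_apply_eq_sum {M N : ℕ} (F : Matrix (Fin M) (Fin N) ℝ) (k l : Fin M) :
    (F * Fᵀ) k l = ∑ i, F k i * F l i := by
  simp [mul_apply]

theorem modulatedHTF_gram {M N : ℕ} {γ : ℝ} (hγ : γ = 1 ∨ γ = -1) (k l : Fin M) :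
    (modulatedHTF M N γ * (modulatedHTF M N γ)ᵀ) k l =
      (-1) ^ ((k : ℕ) + (l : ℕ)) * ∑ i, htf M N k i * htf M N l i := by
  have hγ2 : γ * γ = 1 := by rcases hγ with rfl | rfl <;> norm_num
  rw [mul_transpose_apply_eq_sum, Finset.mul_sum]
  refine Finset.sum_congr rfl fun i _ => ?_
  simp only [modulatedHTF, of_apply, pow_add, pow_one]
  linear_combination ((-1) ^ (k : ℕ) * (-1) ^ (l : ℕ) * htf M N k i * htf M N l i) * hγ2

theorem hasSimplexGram_modulatedHTF {N : ℕ} (hN : 0 < N) {γ : ℝ} (hγ : γ = 1 ∨ γ = -1) :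
    HasSimplexGram (modulatedHTF (N + 1) N γ) := by
  intro k l
  have hN' : (N : ℝ) ≠ 0 := by positivity
  rw [modulatedHTF_gram hγ]
  split_ifs with hkl
  · subst hkl
    rw [htf_gram_self hN, ← two_mul, pow_mul]
    norm_num
  have hM' : ((N + 1 : ℕ) : ℝ) ≠ 0 := by positivity
  set θ : ℝ := ((k : ℕ) - (l : ℕ) : ℝ) * Real.pi / ((N + 1 : ℕ) : ℝ) with hθ
  have hsin : Real.sin θ ≠ 0 := by
    rw [Real.sin_ne_zero_iff]
    intro n hn
    have h1 : (n : ℝ) * ((N + 1 : ℕ) : ℝ) = ((k : ℕ) - (l : ℕ) : ℝ) := by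
      have : ((n : ℝ) * ((N + 1 : ℕ) : ℝ)) * Real.pi = ((k : ℕ) - (l : ℕ) : ℝ) * Real.pi := by
        rw [mul_right_comm, hn, hθ]
        field_simp
      exact mul_right_cancel₀ Real.pi_ne_zero this
    have h2 : n * ((N : ℤ) + 1) = ((k : ℕ) : ℤ) - ((l : ℕ) : ℤ) := by exact_mod_cast h1
    have hk := k.2
    have hl := l.2
    have hne : (k : ℕ) ≠ (l : ℕ) := fun h => hkl (Fin.ext h)
    rcases lt_trichotomy n 0 with h | h | h
    · have : n * ((N : ℤ) + 1) ≤ -1 * ((N : ℤ) + 1) :=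
        mul_le_mul_of_nonneg_right (by omega) (by omega)
      omega
    · subst h; omega
    · have : 1 * ((N : ℤ) + 1) ≤ n * ((N : ℤ) + 1) :=
        mul_le_mul_of_nonneg_right (by omega) (by omega)
      omega
  have hmul := htf_gram_mul_sin (M := N + 1) hN k l
  rw [← hθ] at hmul
  have harg : (N : ℝ) * θ = ((((k : ℕ) : ℤ) - ((l : ℕ) : ℤ) : ℤ) : ℝ) * Real.pi - θ := by
    have : ((N + 1 : ℕ) : ℝ) * θ = ((k : ℕ) - (l : ℕ) : ℝ) * Real.pi := by
      rw [hθ]; field_simp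
    push_cast at this ⊢
    linarith
  have hpow : ((-1 : ℝ) ^ (((k : ℕ) : ℤ) - ((l : ℕ) : ℤ))) = (-1) ^ ((k : ℕ) + (l : ℕ)) := by
    rw [zpow_sub₀ (by norm_num), zpow_natCast, zpow_natCast, pow_add, div_eq_mul_inv, ← inv_pow]
    norm_num
  rw [harg, Real.sin_int_mul_pi_sub, hpow] at hmul
  have hsq : ((-1 : ℝ) ^ ((k : ℕ) + (l : ℕ))) * (-1) ^ ((k : ℕ) + (l : ℕ)) = 1 := by
    rw [← mul_pow]; norm_num
  rw [eq_div_iff hN']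
  apply mul_right_cancel₀ hsin
  linear_combination (-1 : ℝ) ^ ((k : ℕ) + (l : ℕ)) * hmul - Real.sin θ * hsq

theorem IsModulatedHTFUpToEquiv.hasSimplexGram {N : ℕ} (hN : 0 < N)
    {F : Matrix (Fin (N + 1)) (Fin N) ℝ} (hF : IsModulatedHTFUpToEquiv F) : HasSimplexGram F := by
  obtain ⟨γ, hγ, G, ⟨U, hU, hG⟩, τ, hτ⟩ := hF
  intro k l
  have hUU : Uᵀ * U = 1 := (mem_orthogonalGroup_iff' (Fin N) ℝ).1 hU
  have hdot : (F * Fᵀ) k l =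
      (modulatedHTF (N + 1) N γ * (modulatedHTF (N + 1) N γ)ᵀ) (τ k) (τ l) := by
    change F k ⬝ᵥ F l = modulatedHTF (N + 1) N γ (τ k) ⬝ᵥ modulatedHTF (N + 1) N γ (τ l)
    rw [hτ, hτ, hG, hG, dotProduct_mulVec, ← mulVec_transpose, mulVec_mulVec, hUU, one_mulVec]
  rw [hdot, hasSimplexGram_modulatedHTF hN hγ]
  simp

theorem HasSimplexGram.mulVec {N : ℕ} (hN : 0 < N) {F : Matrix (Fin (N + 1)) (Fin N) ℝ}
    (hF : HasSimplexGram F) (v : Fin (N + 1) → ℝ) (k : Fin (N + 1)) :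
    (F * Fᵀ).mulVec v k = ((N + 1 : ℕ) : ℝ) / N * v k - 1 / (N : ℝ) * ∑ l, v l := by
  have hN' : (N : ℝ) ≠ 0 := by positivity
  have h : ∀ l, (F * Fᵀ) k l * v l =
      (if k = l then ((N + 1 : ℕ) : ℝ) / N * v l else 0) - 1 / (N : ℝ) * v l := by
    intro l
    rw [hF]
    split_ifs
    · push_cast
      field_simp
      ring
    · ring
  simp only [Matrix.mulVec, dotProduct, h]
  rw [Finset.sum_sub_distrib, ← Finset.mul_sum]
  simp

/-- Frames with the Gram matrix of the regular simplex are related by an orthogonal matrix. -/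
theorem HasSimplexGram.typeIEquiv {N : ℕ} (hN : 0 < N) {F Φ : Matrix (Fin (N + 1)) (Fin N) ℝ}
    (hF : IsUNTF F) (hFs : HasSimplexGram F) (hΦ : HasSimplexGram Φ) : TypeIEquiv Φ F := by
  have hN' : (N : ℝ) ≠ 0 := by positivity
  have hM' : ((N + 1 : ℕ) : ℝ) ≠ 0 := by positivity
  have hc : ((N : ℝ) / ((N + 1 : ℕ) : ℝ)) * (((N + 1 : ℕ) : ℝ) / N) = 1 := by field_simp
  have hgram : Φ * Φᵀ = F * Fᵀ := by ext k l; rw [hΦ, hFs]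
  have hproj : Φ * Φᵀ * F = (((N + 1 : ℕ) : ℝ) / N) • F := by
    rw [hgram, Matrix.mul_assoc, hF.tight, Matrix.mul_smul, Matrix.mul_one]
  let U : Matrix (Fin N) (Fin N) ℝ := ((N : ℝ) / ((N + 1 : ℕ) : ℝ)) • (Fᵀ * Φ)
  have hUt : Uᵀ = ((N : ℝ) / ((N + 1 : ℕ) : ℝ)) • (Φᵀ * F) := by
    simp [U, transpose_smul, transpose_mul]
  have hΦU : Φ * Uᵀ = F := by
    rw [hUt, Matrix.mul_smul, ← Matrix.mul_assoc, hproj, smul_smul, hc, one_smul]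
  refine ⟨U, (mem_orthogonalGroup_iff (Fin N) ℝ).2 ?_, fun k => ?_⟩
  · change U * Uᵀ = 1
    have : U * Uᵀ = ((N : ℝ) / ((N + 1 : ℕ) : ℝ)) • (Fᵀ * (Φ * Uᵀ)) := by
      simp only [U, Matrix.smul_mul, Matrix.mul_assoc]
    rw [this, hΦU, hF.tight, smul_smul, hc, one_smul]
  · conv_lhs => rw [← hΦU]
    ext i
    simp [Matrix.mul_apply, Matrix.mulVec, dotProduct, mul_comm]

theorem IsUNTF.mulVec_canonicalDecode {M N : ℕ} (hN : 0 < N) (hM : 0 < M)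
    {F : Matrix (Fin M) (Fin N) ℝ} (hF : IsUNTF F) (y : Fin M → ℝ) (σ : Equiv.Perm (Fin M)) :
    F.mulVec (canonicalDecode F y σ) =
      ((N : ℝ) / M) • (F * Fᵀ).mulVec (y ∘ (σ⁻¹ : Equiv.Perm (Fin M))) := by
  have hN' : (N : ℝ) ≠ 0 := by positivity
  have hM' : (M : ℝ) ≠ 0 := by positivity
  have hinv : (Fᵀ * F)⁻¹ = ((N : ℝ) / M) • (1 : Matrix (Fin N) (Fin N) ℝ) := by
    apply inv_eq_left_inv
    rw [hF.tight, smul_mul_smul_comm, Matrix.one_mul]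
    have : (N : ℝ) / M * (M / N) = 1 := by field_simp
    rw [this, one_smul]
  rw [canonicalDecode, pinv, hinv, permMatrix_mulVec, Matrix.smul_mul, Matrix.one_mul, mulVec_mulVec,
    Matrix.mul_smul, smul_mulVec]

theorem diffMatrix_mulVec {M : ℕ} (m : Composition M) (z : Fin M → ℝ) (p : DiffRow m) :
    (diffMatrix m).mulVec z p = z p.1.1 - z p.1.2 := by
  have hne : p.1.1 ≠ p.1.2 := by
    intro h
    have := p.2
    rw [h] at this
    omega
  have h : ∀ j, diffMatrix m p j * z j =
      (if j = p.1.1 then z j else 0) - if j = p.1.2 then z j else 0 := by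
    intro j
    simp only [diffMatrix, of_apply]
    split_ifs with h1 h2 <;> simp_all
  simp only [Matrix.mulVec, dotProduct, h, Finset.sum_sub_distrib]
  simp

theorem HasSimplexGram.canonicalConsistent {N : ℕ} (hN : 0 < N)
    {F : Matrix (Fin (N + 1)) (Fin N) ℝ} (hF : IsUNTF F) (hFs : HasSimplexGram F)
    {m : Composition (N + 1)} {y : Fin (N + 1) → ℝ} (hy : IsVariantICodeword m y) :
    CanonicalConsistent F m y := by
  intro x σ _ p
  have hN' : (N : ℝ) ≠ 0 := by positivity
  have hM' : ((N + 1 : ℕ) : ℝ) ≠ 0 := by positivity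
  have hval : ∀ k, (F.mulVec (canonicalDecode F y σ)) (σ k) =
      y k - 1 / ((N + 1 : ℕ) : ℝ) * ∑ l, (y ∘ (σ⁻¹ : Equiv.Perm (Fin (N + 1)))) l := by
    intro k
    rw [hF.mulVec_canonicalDecode hN N.succ_pos, Pi.smul_apply, hFs.mulVec hN]
    simp only [Function.comp_apply, Equiv.Perm.inv_def, Equiv.symm_apply_apply, smul_eq_mul]
    field_simp
  rw [diffMatrix_mulVec, permMatrix_mulVec, Function.comp_apply, Function.comp_apply, hval, hval]
  obtain ⟨μ, hμ, hyμ⟩ := hy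
  have hlt : m.index p.1.1 < m.index p.1.2 := by
    rw [Fin.lt_def]
    have := p.2
    omega
  have := hμ hlt
  rw [← hyμ, ← hyμ] at this
  linarith

theorem Composition.ones_index_val {M : ℕ} (k : Fin M) :
    ((Composition.ones M).index k : ℕ) = k := by
  have h := congrArg Fin.val ((Composition.ones M).embedding_comp_inv k)
  rw [Composition.coe_embedding, Composition.ones_sizeUpTo] at h
  have h1 := ((Composition.ones M).invEmbedding k).2.trans_eq (Composition.ones_blocksFun M _)
  have h2 := ((Composition.ones M).index k).2.trans_eq (Composition.ones_length M)
  omega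

/-- Consistency for the finest composition makes the Gram matrix order-preserving. Every
permutation is an encoding of the zero vector, so no restriction on the order arises. -/
theorem gram_mulVec_le_of_consistent {M N : ℕ} (hN : 0 < N) (hM : 0 < M)
    {F : Matrix (Fin M) (Fin N) ℝ} (hF : IsUNTF F)
    (h : ∀ (m : Composition M) (y : Fin M → ℝ), IsVariantICodeword m y → CanonicalConsistent F m y)
    {y : Fin M → ℝ} (hy : Function.Injective y) {k l : Fin M} (hkl : y l < y k) :
    (F * Fᵀ).mulVec y l ≤ (F * Fᵀ).mulVec y k := by
  obtain ⟨M, rfl⟩ : ∃ n, M = n + 1 := ⟨M - 1, by omega⟩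
  let σ : Equiv.Perm (Fin (M + 1)) := Tuple.sort (fun i => -y i)
  have hanti : StrictAnti (y ∘ σ) := by
    have hmono : Monotone ((fun i => -y i) ∘ σ) := Tuple.monotone_sort _
    have : Antitone (y ∘ σ) := fun i j hij => neg_le_neg_iff.1 (hmono hij)
    exact this.strictAnti_of_injective (hy.comp σ.injective)
  have hcode : IsVariantICodeword (Composition.ones (M + 1)) (y ∘ σ) := by
    refine ⟨(y ∘ σ) ∘ Fin.cast (Composition.ones_length (M + 1)), ?_, fun k => ?_⟩
    · exact fun i j hij => hanti hij
    · simp only [Function.comp_apply]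
      congr 2
      exact Fin.ext (Composition.ones_index_val k).symm
  have henc : IsVariantIEncoding F (Composition.ones (M + 1)) 0 σ := by
    refine ⟨fun i j hij hlt => ?_, fun i j _ => ?_⟩
    · have := congrArg Fin.val hij
      rw [Composition.ones_index_val, Composition.ones_index_val] at this
      exact absurd (Fin.ext this) hlt.ne
    · simp
  have hcons := h _ _ hcode 0 σ henc
  have hdec : (y ∘ σ) ∘ (σ⁻¹ : Equiv.Perm (Fin (M + 1))) = y := by ext i; simp
  have hA : Antitone ((F * Fᵀ).mulVec y ∘ σ) := by
    rw [Fin.antitone_iff_succ_le]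
    intro i
    have := hcons ⟨(i.castSucc, i.succ), by simp [Composition.ones_index_val]⟩
    rw [diffMatrix_mulVec, permMatrix_mulVec, hF.mulVec_canonicalDecode hN hM, hdec] at this
    simp only [Function.comp_apply, Pi.smul_apply, smul_eq_mul] at this ⊢
    rw [← mul_sub] at this
    have hpos : (0 : ℝ) < (N : ℝ) / ((M + 1 : ℕ) : ℝ) := by positivity
    exact sub_nonneg.1 (nonneg_of_mul_nonneg_right this hpos)
  have hle : σ.symm k ≤ σ.symm l := by
    by_contra hlt
    have := hanti (not_le.1 hlt)
    simp only [Function.comp_apply, Equiv.apply_symm_apply] at this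
    exact lt_asymm this hkl
  have := hA hle
  simpa using this

/-- An order-preserving matrix has constant columns off the diagonal. -/
theorem apply_eq_of_mulVec_le {M : ℕ} {A : Matrix (Fin M) (Fin M) ℝ}
    (hA : ∀ y : Fin M → ℝ, Function.Injective y → ∀ k l, y l < y k →
      A.mulVec y l ≤ A.mulVec y k)
    {j k l : Fin M} (hk : k ≠ j) (hl : l ≠ j) : A k j = A l j := by
  wlog hlk : l < k generalizing k l
  · rcases (not_lt.1 hlk).eq_or_lt with h | h
    · rw [h]
    · exact (this hl hk h).symm
  let y (t : ℝ) : Fin M → ℝ := Function.update (fun i => ((i : ℕ) : ℝ)) j t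
  let c : ℝ := A.mulVec (y 0) k - A.mulVec (y 0) l
  have hupd : ∀ t i, A.mulVec (y t) i = A.mulVec (y 0) i + t * A i j := by
    intro t i
    have : y t = y 0 + t • Pi.single j 1 := by
      ext i
      by_cases hi : i = j
      · subst hi; simp [y]
      · simp [y, hi]
    rw [this, mulVec_add, mulVec_smul]
    simp
  have key : ∀ t : ℝ, (M : ℝ) ≤ |t| → 0 ≤ c + t * (A k j - A l j) := by
    intro t ht
    have hne : ∀ i : Fin M, ((i : ℕ) : ℝ) ≠ t := by
      rintro i rfl
      rw [abs_of_nonneg (by positivity)] at ht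
      have : M ≤ (i : ℕ) := by exact_mod_cast ht
      exact absurd i.2 (by omega)
    have hinj : Function.Injective (y t) := by
      intro a b hab
      by_cases ha : a = j <;> by_cases hb : b = j
      · rw [ha, hb]
      · subst ha
        simp only [y, Function.update_self, Function.update_of_ne hb] at hab
        exact absurd hab.symm (hne b)
      · subst hb
        simp only [y, Function.update_self, Function.update_of_ne ha] at hab
        exact absurd hab (hne a)
      · simp only [y, Function.update_of_ne ha, Function.update_of_ne hb] at hab
        exact Fin.ext (by exact_mod_cast hab)
    have hlt : y t l < y t k := by
      simp only [y, Function.update_of_ne hk, Function.update_of_ne hl]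
      exact_mod_cast hlk
    have := hA (y t) hinj k l hlt
    rw [hupd t k, hupd t l] at this
    simp only [c]
    linarith
  by_contra hd
  have hd' : A k j - A l j ≠ 0 := sub_ne_zero.2 hd
  let t : ℝ := -(M + |c| + 1) / (A k j - A l j)
  have hct : c + t * (A k j - A l j) < 0 := by
    simp only [t]
    rw [div_mul_cancel₀ _ hd']
    have := le_abs_self c
    have : (0 : ℝ) ≤ M := by positivity
    linarith
  rcases le_total (M : ℝ) |t| with h | h
  · exact absurd (key t h) (not_le.2 hct)
  · have h1 := key (M : ℝ) (le_abs_self _)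
    have h2 := key (-M : ℝ) (by rw [abs_neg]; exact le_abs_self _)
    obtain ⟨h3, h4⟩ := abs_le.1 h
    rcases le_total 0 (A k j - A l j) with h5 | h5 <;> nlinarith

theorem offDiag_eq_of_columns {M : ℕ} {A : Matrix (Fin M) (Fin M) ℝ} (hs : ∀ k l, A k l = A l k)
    (hA : ∀ j k l, k ≠ j → l ≠ j → A k j = A l j) {i j k l : Fin M} (hij : i ≠ j) (hkl : k ≠ l) :
    A i j = A k l := by
  by_cases hkj : k = j
  · subst hkj
    by_cases hil : i = l
    · subst hil; exact hs _ _
    · rw [hs i k, hA i k l hij.symm (Ne.symm hil), hs l i, hA l i k hil hkl]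
  · rw [hA j i k hij hkj, hs k j, hA k j l (Ne.symm hkj) (Ne.symm hkl), hs l k]

/-- A unit-norm tight frame with constant mutual inner products is a regular simplex. -/
theorem IsUNTF.simplex_of_offDiag_const {M N : ℕ} (hN : 2 ≤ N) (hNM : N < M)
    {F : Matrix (Fin M) (Fin N) ℝ} (hF : IsUNTF F) {c : ℝ}
    (hc : ∀ k l, k ≠ l → (F * Fᵀ) k l = c) : M = N + 1 ∧ HasSimplexGram F := by
  have hN' : (2 : ℝ) ≤ N := by exact_mod_cast hN
  have hNM' : (N : ℝ) < M := by exact_mod_cast hNM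
  have hN0 : (N : ℝ) ≠ 0 := by positivity
  have hdiag : ∀ k, (F * Fᵀ) k k = 1 := by
    intro k
    rw [mul_transpose_apply_eq_sum, ← hF.unit_norm k]
    exact Finset.sum_congr rfl fun i _ => (sq _).symm
  have happ : ∀ k l, (F * Fᵀ) k l = (1 - c) * (if k = l then 1 else 0) + c := by
    intro k l
    split_ifs with h
    · subst h; rw [hdiag]; ring
    · rw [hc k l h]; ring
  have hsq : (F * Fᵀ) * (F * Fᵀ) = ((M : ℝ) / N) • (F * Fᵀ) := by
    rw [Matrix.mul_assoc, ← Matrix.mul_assoc Fᵀ, hF.tight, Matrix.smul_mul, Matrix.one_mul, Matrix.mul_smul]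
  have hent : ∀ k l, (1 - c) * (F * Fᵀ) k l + c * (1 + (M - 1) * c) = M / N * (F * Fᵀ) k l := by
    intro k l
    have hcol : ∑ j, (F * Fᵀ) j l = 1 + (M - 1) * c := by
      simp only [happ, Finset.sum_add_distrib, ← Finset.mul_sum]
      simp
      ring
    have h := congrFun (congrFun hsq k) l
    rw [Matrix.smul_apply, smul_eq_mul, Matrix.mul_apply] at h
    rw [← h, ← hcol, Finset.mul_sum]
    have hterm : ∀ j, (F * Fᵀ) k j * (F * Fᵀ) j l =
        (if k = j then (1 - c) * (F * Fᵀ) j l else 0) + c * (F * Fᵀ) j l := by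
      intro j
      rw [happ k j]
      split_ifs <;> ring
    simp only [hterm, Finset.sum_add_distrib]
    simp
  let k0 : Fin M := ⟨0, by omega⟩
  let k1 : Fin M := ⟨1, by omega⟩
  have h01 : k0 ≠ k1 := by simp [k0, k1]
  have e0 := hent k0 k0
  have e1 := hent k0 k1
  rw [hdiag] at e0
  rw [hc _ _ h01] at e1
  have e2 : (1 - c) * (c * (1 + (M - 1) * c)) = 0 := by linear_combination e1 - c * e0
  have hMN : 1 < (M : ℝ) / N := by rw [one_lt_div (by positivity)]; exact hNM'
  have hc0 : c ≠ 0 := by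
    rintro rfl
    simp only [sub_zero, mul_one, zero_mul, add_zero] at e0
    exact hMN.ne e0
  have hc1 : 1 - c ≠ 0 := by
    intro h
    have hc' : c = 1 := by linarith
    rw [hc'] at e0
    field_simp at e0
    nlinarith
  have e3 : 1 + ((M : ℝ) - 1) * c = 0 := by
    rcases mul_eq_zero.1 e2 with h | h
    · exact absurd h hc1
    · exact (mul_eq_zero.1 h).resolve_left hc0
  rw [e3] at e0
  have e4 : (1 - c) * N = M := by
    field_simp at e0
    linarith
  have e5 : (M : ℝ) * ((M : ℝ) - (N + 1)) = 0 := by linear_combination (1 - (M : ℝ)) * e4 - N * e3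
  have hMr : (M : ℝ) = N + 1 := by
    have hM0 : (M : ℝ) ≠ 0 := by linarith
    linarith [(mul_eq_zero.1 e5).resolve_left hM0]
  refine ⟨by exact_mod_cast hMr, fun k l => ?_⟩
  split_ifs with h
  · rw [h, hdiag]
  · rw [hc k l h, eq_div_iff hN0]
    rw [hMr] at e4
    linarith

/-- Characterization of the unit-norm tight frames for which canonical reconstruction is consistent
with Variant I frame permutation quantization. -/
theorem stmt11 {M N : ℕ} (hN : 2 ≤ N) (hNM : N < M) (hM : 3 ≤ M)
    (F : Matrix (Fin M) (Fin N) ℝ) (hF : IsUNTF F) :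
    (∀ (m : Composition M) (y : Fin M → ℝ), IsVariantICodeword m y → CanonicalConsistent F m y) ↔
      (M = N + 1 ∧ IsModulatedHTFUpToEquiv F) := by
  have hN0 : 0 < N := by omega
  constructor
  · intro h
    have hcol : ∀ j k l, k ≠ j → l ≠ j → (F * Fᵀ) k j = (F * Fᵀ) l j := fun j k l hk hl =>
      apply_eq_of_mulVec_le (fun y hy _ _ hkl =>
        gram_mulVec_le_of_consistent hN0 (by omega) hF h hy hkl) hk hl
    have hsymm : ∀ k l, (F * Fᵀ) k l = (F * Fᵀ) l k := fun k l => by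
      simp only [mul_transpose_apply_eq_sum, mul_comm]
    have h01 : (⟨0, by omega⟩ : Fin M) ≠ ⟨1, by omega⟩ := by simp
    obtain ⟨rfl, hs⟩ := hF.simplex_of_offDiag_const hN hNM fun k l hkl =>
      offDiag_eq_of_columns hsymm hcol hkl h01
    exact ⟨rfl, 1, Or.inl rfl, F,
      hs.typeIEquiv hN0 hF (hasSimplexGram_modulatedHTF hN0 (Or.inl rfl)), 1, fun _ => rfl⟩
  · rintro ⟨rfl, h⟩ m y hy
    exact (h.hasSimplexGram hN0).canonicalConsistent hN0 hF hy
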